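/- Fix w > 0 and z > 0, and set q = q(N) with q(N)/(w√N) → z as N → ∞ (e.g. q = wz√N). Then the complete-graph potential U_q^(N) = ∑_{h=1}^{N-1} (q/(q+Nw)) (Nw/(q+Nw))^{h-1} ∏_{k=2}^h (1-k/N) converges as N → ∞ to √(2π)·z·exp(z²/2)·P(Z > z), where Z is a standard Gaussian. -/

import Mathlib

open Filter Real

/-!
Put `p = q / (q + N w)` and `n = h - 1`. The summand is `p (1 - p) ^ n` times the birthday-problem
product `∏ (1 - k / N)`. Since `√N p → z`, at `n = ⌊√N x⌋` the last two factors tend to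
`exp (-x z)` and `exp (-x ^ 2 / 2)`. Hence the potential, which is `√N p` times a Riemann sum of
mesh `1 / √N`, tends to `z ∫₀^∞ exp (-x z - x ^ 2 / 2) dx`, and completing the square gives the
Gaussian tail. It is the Gaussian decay of the birthday product, rather than the geometric decay of
`(1 - p) ^ n`, that dominates the Riemann sums.
-/

section

open MeasureTheory
open scoped Topology

theorem map_floor_mul_restrict_Ioi {s : ℝ} (hs : 0 < s) :
    (volume.restrict (Set.Ioi (0 : ℝ))).map (fun x => ⌊s * x⌋₊) =
      ENNReal.ofReal s⁻¹ • Measure.count := by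
  refine Measure.ext_of_singleton fun n => ?_
  have hfiber : (fun x : ℝ => ⌊s * x⌋₊) ⁻¹' {n} ∩ Set.Ici 0 = Set.Ico (n / s) ((n + 1) / s) := by
    ext x
    simp only [Set.mem_inter_iff, Set.mem_preimage, Set.mem_singleton_iff, Set.mem_Ici,
      Set.mem_Ico, div_le_iff₀' hs, lt_div_iff₀' hs]
    constructor
    · rintro ⟨hfloor, hx⟩
      exact (Nat.floor_eq_iff (by positivity)).1 hfloor
    · intro h
      have hsx : 0 ≤ s * x := n.cast_nonneg.trans h.1
      exact ⟨(Nat.floor_eq_iff hsx).2 h, nonneg_of_mul_nonneg_right hsx hs⟩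
  rw [Measure.restrict_congr_set Ioi_ae_eq_Ici,
    Measure.map_apply (by fun_prop) (measurableSet_singleton n),
    Measure.restrict_apply' measurableSet_Ici, hfiber, Real.volume_Ico]
  simp [← sub_div]

theorem integral_Ioi_comp_floor_mul {s : ℝ} (hs : 0 < s) (f : ℕ → ℝ) :
    ∫ x in Set.Ioi (0 : ℝ), f ⌊s * x⌋₊ = s⁻¹ * ∑' n, f n := by
  have hmap : ∫ x in Set.Ioi (0 : ℝ), f ⌊s * x⌋₊ =
      ∫ n, f n ∂(volume.restrict (Set.Ioi (0 : ℝ))).map fun x => ⌊s * x⌋₊ :=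
    (integral_map (by fun_prop) (by fun_prop)).symm
  have hcount : ∫ n, f n ∂Measure.count = ∑' n, f n := by
    have hiff : Integrable f Measure.count ↔ Summable f :=
      integrable_count_iff.trans summable_norm_iff
    by_cases hf : Summable f
    · simp [integral_countable (hiff.2 hf), measureReal_def]
    · rw [integral_undef (mt hiff.1 hf), tsum_eq_zero_of_not_summable hf]
  rw [hmap, map_floor_mul_restrict_Ioi hs, integral_smul_measure, hcount,
    ENNReal.toReal_ofReal (by positivity), smul_eq_mul]

theorem tendsto_inv_mul_tsum_of_dominated {ι : Type*} {l : Filter ι} [l.IsCountablyGenerated]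
    {s : ι → ℝ} {f : ι → ℕ → ℝ} {g bound : ℝ → ℝ} (hs : ∀ᶠ i in l, 0 < s i)
    (hbound : IntegrableOn bound (Set.Ioi 0))
    (hf : ∀ᶠ i in l, ∀ x > 0, |f i ⌊s i * x⌋₊| ≤ bound x)
    (hlim : ∀ x > 0, Tendsto (fun i => f i ⌊s i * x⌋₊) l (𝓝 (g x))) :
    Tendsto (fun i => (s i)⁻¹ * ∑' n, f i n) l (𝓝 (∫ x in Set.Ioi 0, g x)) := by
  have hint : Tendsto (fun i => ∫ x in Set.Ioi (0 : ℝ), f i ⌊s i * x⌋₊) l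
      (𝓝 (∫ x in Set.Ioi 0, g x)) := by
    refine tendsto_integral_filter_of_dominated_convergence bound ?_ ?_ hbound ?_
    · exact .of_forall fun i =>
        ((measurable_from_nat (f := f i)).comp (by fun_prop)).aestronglyMeasurable
    · filter_upwards [hf] with i hi
      exact (ae_restrict_iff' measurableSet_Ioi).2 (.of_forall hi)
    · exact (ae_restrict_iff' measurableSet_Ioi).2 (.of_forall hlim)
  refine hint.congr' ?_
  filter_upwards [hs] with i hi
  exact integral_Ioi_comp_floor_mul hi (f i)

theorem abs_log_one_add_sub_le {x : ℝ} (hx : |x| ≤ 1 / 2) : |log (1 + x) - x| ≤ 2 * x ^ 2 := by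
  have h := abs_log_sub_add_sum_range_le (x := -x) (by rw [abs_neg]; linarith) 1
  calc |log (1 + x) - x| ≤ x ^ 2 / (1 - |x|) := by
        simpa [neg_add_eq_sub] using h
    _ ≤ x ^ 2 / (1 / 2) := by gcongr; linarith
    _ = 2 * x ^ 2 := by ring

theorem abs_sum_log_one_add_sub_sum_le {κ : Type*} {s : Finset κ} {a : κ → ℝ}
    (ha : ∀ k ∈ s, |a k| ≤ 1 / 2) :
    |∑ k ∈ s, log (1 + a k) - ∑ k ∈ s, a k| ≤ 2 * ∑ k ∈ s, a k ^ 2 := by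
  rw [← Finset.sum_sub_distrib, Finset.mul_sum]
  exact (Finset.abs_sum_le_sum_abs _ _).trans
    (Finset.sum_le_sum fun k hk => abs_log_one_add_sub_le (ha k hk))

theorem tendsto_prod_one_add_of_tendsto_sum {ι κ : Type*} {l : Filter ι} {s : ι → Finset κ}
    {a : ι → κ → ℝ} {c : ℝ} (hsum : Tendsto (fun i => ∑ k ∈ s i, a i k) l (𝓝 c))
    (hsq : Tendsto (fun i => ∑ k ∈ s i, a i k ^ 2) l (𝓝 0)) :
    Tendsto (fun i => ∏ k ∈ s i, (1 + a i k)) l (𝓝 (exp c)) := by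
  have hsmall : ∀ᶠ i in l, ∀ k ∈ s i, |a i k| ≤ 1 / 2 := by
    filter_upwards [hsq.eventually_le_const (by norm_num : (0 : ℝ) < (1 / 2) ^ 2)] with i hi k hk
    refine abs_le_of_sq_le_sq ?_ (by norm_num)
    exact (Finset.single_le_sum (fun j _ => sq_nonneg (a i j)) hk).trans hi
  have hdiff : Tendsto (fun i => ∑ k ∈ s i, log (1 + a i k) - ∑ k ∈ s i, a i k) l (𝓝 0) := by
    refine squeeze_zero_norm' ?_ (by simpa using hsq.const_mul 2)
    filter_upwards [hsmall] with i hi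
    exact abs_sum_log_one_add_sub_sum_le hi
  have hlog : Tendsto (fun i => ∑ k ∈ s i, log (1 + a i k)) l (𝓝 c) := by
    simpa using hdiff.add hsum
  refine ((continuous_exp.tendsto c).comp hlog).congr' ?_
  filter_upwards [hsmall] with i hi
  rw [Function.comp_apply, exp_sum]
  refine Finset.prod_congr rfl fun k hk => exp_log ?_
  linarith [neg_le_of_abs_le (hi k hk)]

theorem tendsto_one_add_pow_of_tendsto_mul {ι : Type*} {l : Filter ι} {n : ι → ℕ} {a : ι → ℝ}
    {c : ℝ} (hna : Tendsto (fun i => n i * a i) l (𝓝 c)) (ha : Tendsto a l (𝓝 0)) :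
    Tendsto (fun i => (1 + a i) ^ n i) l (𝓝 (exp c)) := by
  have hsq : Tendsto (fun i => n i * a i ^ 2) l (𝓝 0) := by
    simpa [sq, mul_assoc] using hna.mul ha
  simpa using tendsto_prod_one_add_of_tendsto_sum (s := fun i => Finset.range (n i))
    (a := fun i _ => a i) (by simpa using hna) (by simpa using hsq)

theorem tendsto_sqrt_natCast_atTop : Tendsto (fun N : ℕ => √(N : ℝ)) atTop atTop :=
  tendsto_sqrt_atTop.comp tendsto_natCast_atTop_atTop

theorem tendsto_inv_sqrt_natCast : Tendsto (fun N : ℕ => (√(N : ℝ))⁻¹) atTop (𝓝 0) :=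
  tendsto_sqrt_natCast_atTop.inv_tendsto_atTop

theorem tendsto_floor_sqrt_mul_div_sqrt {x : ℝ} (hx : 0 ≤ x) :
    Tendsto (fun N : ℕ => (⌊√(N : ℝ) * x⌋₊ : ℝ) / √(N : ℝ)) atTop (𝓝 x) := by
  simpa [Function.comp_def, mul_comm] using (tendsto_nat_floor_mul_div_atTop hx).comp
    tendsto_sqrt_natCast_atTop

theorem tendsto_zero_of_tendsto_sqrt_mul {p : ℕ → ℝ} {z : ℝ}
    (hp : Tendsto (fun N : ℕ => √(N : ℝ) * p N) atTop (𝓝 z)) : Tendsto p atTop (𝓝 0) := by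
  have h := tendsto_inv_sqrt_natCast.mul hp
  rw [zero_mul] at h
  refine h.congr' ?_
  filter_upwards [eventually_gt_atTop 0] with N hN
  exact inv_mul_cancel_left₀ (by positivity) (p N)

/-- The product in the birthday problem: for `n < N`, the probability that `n` independent uniform
elements of an `N`-element set, drawn after two distinct ones are fixed, successively avoid each
other and the first two. The factors are indexed by `2 ≤ k ≤ n + 1`, as in the potential. -/
noncomputable def birthdayProduct (N n : ℕ) : ℝ :=
  ∏ k ∈ Finset.Icc 2 (n + 1), (1 - (k : ℝ) / N)

theorem sum_Icc_two_natCast (n : ℕ) : ∑ k ∈ Finset.Icc 2 (n + 1), (k : ℝ) = n * (n + 3) / 2 := by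
  induction n with
  | zero => simp
  | succ n ih =>
    rw [Finset.sum_Icc_succ_top (by omega), ih]
    push_cast
    ring

theorem birthdayProduct_eq_zero {N n : ℕ} (hN : 2 ≤ N) (hn : N ≤ n + 1) :
    birthdayProduct N n = 0 := by
  have hN0 : (N : ℝ) ≠ 0 := by positivity
  exact Finset.prod_eq_zero (Finset.mem_Icc.2 ⟨hN, hn⟩) (by rw [div_self hN0, sub_self])

theorem abs_birthdayProduct_le {N n : ℕ} (hN : 2 ≤ N) :
    |birthdayProduct N n| ≤ exp (-(n * (n + 3) / 2 / N)) := by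
  rcases le_or_gt N (n + 1) with hn | hn
  · rw [birthdayProduct_eq_zero hN hn, abs_zero]
    positivity
  rw [birthdayProduct, Finset.abs_prod, ← sum_Icc_two_natCast, Finset.sum_div,
    ← Finset.sum_neg_distrib, exp_sum]
  refine Finset.prod_le_prod (fun k _ => abs_nonneg _) fun k hk => ?_
  have hkN : (k : ℝ) ≤ N := by exact_mod_cast (Finset.mem_Icc.1 hk).2.trans hn.le
  rw [abs_of_nonneg (sub_nonneg.2 (div_le_one_of_le₀ hkN N.cast_nonneg))]
  exact one_sub_le_exp_neg _

theorem tendsto_birthdayProduct {n : ℕ → ℕ} {x : ℝ}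
    (hn : Tendsto (fun N => (n N : ℝ) / √(N : ℝ)) atTop (𝓝 x)) :
    Tendsto (fun N => birthdayProduct N (n N)) atTop (𝓝 (exp (-x ^ 2 / 2))) := by
  have hsum : Tendsto (fun N : ℕ => (n N * (n N + 3) / 2 / N : ℝ)) atTop (𝓝 (x ^ 2 / 2)) := by
    have h := (hn.mul (hn.add (tendsto_inv_sqrt_natCast.const_mul 3))).div_const 2
    convert h using 2 with N
    · rw [← div_eq_mul_inv, ← add_div, div_mul_div_comm, mul_self_sqrt N.cast_nonneg,
        div_right_comm]
    · ring
  have hmax : Tendsto (fun N : ℕ => (n N + 1 : ℝ) / N) atTop (𝓝 0) := by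
    have h := (hn.add tendsto_inv_sqrt_natCast).mul tendsto_inv_sqrt_natCast
    convert h using 2 with N
    · rw [← one_div, ← add_div, div_mul_div_comm, mul_self_sqrt N.cast_nonneg, mul_one]
    · ring
  have hsq : Tendsto (fun N : ℕ => ∑ k ∈ Finset.Icc 2 (n N + 1), (-((k : ℝ) / N)) ^ 2)
      atTop (𝓝 0) := by
    have hbound := hmax.mul hsum
    rw [zero_mul] at hbound
    refine squeeze_zero (fun N => Finset.sum_nonneg fun k _ => sq_nonneg _) (fun N => ?_) hbound
    rw [← sum_Icc_two_natCast, Finset.sum_div, Finset.mul_sum]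
    refine Finset.sum_le_sum fun k hk => ?_
    have hk' : (k : ℝ) ≤ n N + 1 := by exact_mod_cast (Finset.mem_Icc.1 hk).2
    rw [neg_sq, sq]
    gcongr
  have hneg : Tendsto (fun N : ℕ => ∑ k ∈ Finset.Icc 2 (n N + 1), -((k : ℝ) / N)) atTop
      (𝓝 (-x ^ 2 / 2)) := by
    simpa only [Finset.sum_neg_distrib, ← Finset.sum_div, sum_Icc_two_natCast, neg_div]
      using hsum.neg
  simpa only [birthdayProduct, sub_eq_add_neg] using tendsto_prod_one_add_of_tendsto_sum hneg hsq

theorem abs_one_sub_pow_le_exp (p : ℝ) (n : ℕ) : |(1 - p) ^ n| ≤ exp (n * |p|) := by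
  have hbase : |1 - p| ≤ exp |p| :=
    calc |1 - p| ≤ |1| + |p| := abs_sub 1 p
      _ = |p| + 1 := by rw [abs_one, add_comm]
      _ ≤ exp |p| := add_one_le_exp _
  rw [abs_pow, exp_nat_mul]
  gcongr

theorem abs_one_sub_pow_mul_birthdayProduct_le {N : ℕ} (hN : 2 ≤ N) {p C x : ℝ} (hx : 0 ≤ x)
    (hp : |√(N : ℝ) * p| ≤ C) :
    |(1 - p) ^ ⌊√(N : ℝ) * x⌋₊ * birthdayProduct N ⌊√(N : ℝ) * x⌋₊| ≤
      exp (1 + C * x - x ^ 2 / 2) := by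
  set n := ⌊√(N : ℝ) * x⌋₊
  have hN0 : (0 : ℝ) < N := by positivity
  have hn_le : (n : ℝ) ≤ √N * x := Nat.floor_le (by positivity)
  have hn_gt : √N * x < n + 1 := Nat.lt_floor_add_one _
  have hgeom : n * |p| ≤ C * x :=
    calc n * |p| ≤ √N * x * |p| := by gcongr
      _ = |√N * p| * x := by rw [abs_mul, abs_of_nonneg (sqrt_nonneg _)]; ring
      _ ≤ C * x := by gcongr
  have hgauss : x ^ 2 / 2 - 1 ≤ n * (n + 3) / 2 / N := by
    have hsq : N * x ^ 2 ≤ ((n : ℝ) + 1) ^ 2 :=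
      calc N * x ^ 2 = (√N * x) ^ 2 := by rw [mul_pow, sq_sqrt hN0.le]
        _ ≤ ((n : ℝ) + 1) ^ 2 := by gcongr
    have hN2 : (2 : ℝ) ≤ N := by exact_mod_cast hN
    rw [le_div_iff₀ hN0]
    nlinarith [n.cast_nonneg (α := ℝ)]
  calc |(1 - p) ^ n * birthdayProduct N n|
      ≤ exp (n * |p|) * exp (-(n * (n + 3) / 2 / N)) := by
        rw [abs_mul]
        exact mul_le_mul (abs_one_sub_pow_le_exp p n) (abs_birthdayProduct_le hN) (abs_nonneg _)
          (exp_nonneg _)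
    _ ≤ exp (1 + C * x - x ^ 2 / 2) := by
        rw [← exp_add]
        gcongr
        linarith

theorem integrable_exp_add_mul_sub_sq (a b : ℝ) :
    Integrable fun x : ℝ => exp (a + b * x - x ^ 2 / 2) := by
  have h := ((integrable_exp_neg_mul_sq (b := 1 / 2) (by norm_num)).comp_sub_right b).const_mul
    (exp (a + b ^ 2 / 2))
  refine h.congr (.of_forall fun x => ?_)
  simp only [← exp_add]
  congr 1
  ring

theorem integral_Ioi_exp_neg_mul_mul_exp_neg_sq (z : ℝ) :
    ∫ x in Set.Ioi (0 : ℝ), exp (-(x * z)) * exp (-x ^ 2 / 2) =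
      exp (z ^ 2 / 2) * ∫ t in Set.Ioi z, exp (-t ^ 2 / 2) := by
  have hshift : ∫ t in Set.Ioi z, exp (-t ^ 2 / 2) =
      ∫ x in Set.Ioi (0 : ℝ), exp (-(x + z) ^ 2 / 2) := by
    rw [← (measurePreserving_add_right volume z).setIntegral_preimage_emb
      (measurableEmbedding_addRight z)]
    simp
  rw [hshift, ← integral_const_mul]
  congr 1 with x
  rw [← exp_add, ← exp_add]
  congr 1
  ring

theorem tendsto_one_sub_pow_mul_birthdayProduct_floor {p : ℕ → ℝ} {z x : ℝ} (hx : 0 ≤ x)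
    (hp : Tendsto (fun N : ℕ => √(N : ℝ) * p N) atTop (𝓝 z)) :
    Tendsto (fun N : ℕ => (1 - p N) ^ ⌊√(N : ℝ) * x⌋₊ * birthdayProduct N ⌊√(N : ℝ) * x⌋₊) atTop
      (𝓝 (exp (-(x * z)) * exp (-x ^ 2 / 2))) := by
  have hfloor := tendsto_floor_sqrt_mul_div_sqrt hx
  have hmul : Tendsto (fun N : ℕ => ⌊√(N : ℝ) * x⌋₊ * -p N) atTop (𝓝 (-(x * z))) := by
    refine (hfloor.mul hp).neg.congr' ?_
    filter_upwards [eventually_gt_atTop 0] with N hN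
    field_simp
  have hpow := tendsto_one_add_pow_of_tendsto_mul hmul
    (by simpa using (tendsto_zero_of_tendsto_sqrt_mul hp).neg)
  simpa only [sub_eq_add_neg] using hpow.mul (tendsto_birthdayProduct hfloor)

theorem tendsto_inv_sqrt_mul_sum_pow_mul_birthdayProduct {p : ℕ → ℝ} {z : ℝ}
    (hp : Tendsto (fun N : ℕ => √(N : ℝ) * p N) atTop (𝓝 z)) :
    Tendsto (fun N : ℕ => (√(N : ℝ))⁻¹ *
        ∑ n ∈ Finset.range (N - 1), (1 - p N) ^ n * birthdayProduct N n) atTop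
      (𝓝 (∫ x in Set.Ioi (0 : ℝ), exp (-(x * z)) * exp (-x ^ 2 / 2))) := by
  have hdom : ∀ᶠ N : ℕ in atTop, ∀ x > 0,
      |(1 - p N) ^ ⌊√(N : ℝ) * x⌋₊ * birthdayProduct N ⌊√(N : ℝ) * x⌋₊| ≤
        exp (1 + (|z| + 1) * x - x ^ 2 / 2) := by
    filter_upwards [eventually_ge_atTop 2, hp.abs.eventually_le_const (lt_add_one |z|)]
      with N hN hpN x hx
    exact abs_one_sub_pow_mul_birthdayProduct_le hN hx.le hpN
  have hpos : ∀ᶠ N : ℕ in atTop, 0 < √(N : ℝ) :=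
    (eventually_gt_atTop 0).mono fun N hN => by positivity
  refine (tendsto_inv_mul_tsum_of_dominated (f := fun N n => (1 - p N) ^ n * birthdayProduct N n)
    hpos (integrable_exp_add_mul_sub_sq 1 (|z| + 1)).integrableOn hdom
    fun x hx => tendsto_one_sub_pow_mul_birthdayProduct_floor (le_of_lt hx) hp).congr' ?_
  filter_upwards [eventually_ge_atTop 2] with N hN
  have hzero (n : ℕ) (hn : n ∉ Finset.range (N - 1)) :
      (1 - p N) ^ n * birthdayProduct N n = 0 := by
    have hNn : N ≤ n + 1 := Nat.sub_le_iff_le_add.1 (by simpa using hn)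
    rw [birthdayProduct_eq_zero hN hNn, mul_zero]
  rw [tsum_eq_sum hzero]

theorem eventually_add_natCast_mul_ne_zero {w z : ℝ} (hw : w ≠ 0) {q : ℕ → ℝ}
    (hq : Tendsto (fun N : ℕ => q N / (w * √(N : ℝ))) atTop (𝓝 z)) :
    ∀ᶠ N : ℕ in atTop, q N + N * w ≠ 0 := by
  have hlarge := hq.add_atTop tendsto_sqrt_natCast_atTop
  filter_upwards [hlarge.eventually_gt_atTop 0, eventually_gt_atTop 0] with N hpos hN
  have hfactor : q N + N * w = w * √N * (q N / (w * √N) + √N) := by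
    rw [mul_add, mul_div_cancel₀ _ (by positivity), mul_assoc, mul_self_sqrt N.cast_nonneg,
      mul_comm w]
  rw [hfactor]
  exact mul_ne_zero (by positivity) hpos.ne'

theorem tendsto_sqrt_mul_div_add_natCast_mul {w z : ℝ} (hw : w ≠ 0) {q : ℕ → ℝ}
    (hq : Tendsto (fun N : ℕ => q N / (w * √(N : ℝ))) atTop (𝓝 z)) :
    Tendsto (fun N : ℕ => √(N : ℝ) * (q N / (q N + N * w))) atTop (𝓝 z) := by
  have hden : Tendsto (fun N : ℕ => q N / (w * √(N : ℝ)) * (√(N : ℝ))⁻¹ + 1) atTop (𝓝 1) := by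
    simpa using (hq.mul tendsto_inv_sqrt_natCast).add_const 1
  have h := hq.div hden one_ne_zero
  rw [div_one] at h
  refine h.congr' ?_
  filter_upwards [eventually_gt_atTop 0] with N hN
  have hden_eq : q N / (w * √N) * (√N)⁻¹ + 1 = (q N + N * w) / (N * w) := by
    rw [← div_eq_mul_inv, div_div, mul_assoc, mul_self_sqrt N.cast_nonneg, mul_comm w,
      div_add_one (by positivity)]
  rw [Pi.div_apply, hden_eq]
  field_simp
  rw [sq_sqrt N.cast_nonneg]

theorem sum_Icc_eq_mul_sum_pow_mul_birthdayProduct {q w : ℝ} {N : ℕ} (hqN : q + N * w ≠ 0) :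
    ∑ h ∈ Finset.Icc 1 (N - 1), q / (q + N * w) * (N * w / (q + N * w)) ^ (h - 1) *
        ∏ k ∈ Finset.Icc 2 h, (1 - (k : ℝ) / N) =
      q / (q + N * w) *
        ∑ n ∈ Finset.range (N - 1), (1 - q / (q + N * w)) ^ n * birthdayProduct N n := by
  rw [one_sub_div hqN, add_sub_cancel_left, Finset.mul_sum, ← Finset.Ico_succ_right_eq_Icc,
    Finset.sum_Ico_eq_sum_range]
  simp [birthdayProduct, add_comm 1, mul_assoc]

theorem stmt2_general (w z : ℝ) (hw : w ≠ 0) (q : ℕ → ℝ)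
    (hq : Tendsto (fun N : ℕ => q N / (w * √(N : ℝ))) atTop (𝓝 z)) :
    Tendsto (fun N : ℕ =>
        ∑ h ∈ Finset.Icc 1 (N - 1),
          q N / (q N + (N : ℝ) * w) * ((N : ℝ) * w / (q N + (N : ℝ) * w)) ^ (h - 1) *
            ∏ k ∈ Finset.Icc 2 h, (1 - (k : ℝ) / (N : ℝ)))
      atTop
      (𝓝 (√(2 * π) * z * exp (z ^ 2 / 2) *
        ∫ t in Set.Ioi z, (1 / √(2 * π)) * exp (-t ^ 2 / 2))) := by
  have hp := tendsto_sqrt_mul_div_add_natCast_mul hw hq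
  have hprod := hp.mul (tendsto_inv_sqrt_mul_sum_pow_mul_birthdayProduct hp)
  have htail : √(2 * π) * z * exp (z ^ 2 / 2) *
      ∫ t in Set.Ioi z, (1 / √(2 * π)) * exp (-t ^ 2 / 2) =
      z * ∫ x in Set.Ioi (0 : ℝ), exp (-(x * z)) * exp (-x ^ 2 / 2) := by
    rw [integral_Ioi_exp_neg_mul_mul_exp_neg_sq, integral_const_mul]
    field_simp
  rw [htail]
  refine hprod.congr' ?_
  filter_upwards [eventually_gt_atTop 0, eventually_add_natCast_mul_ne_zero hw hq] with N hN hne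
  rw [sum_Icc_eq_mul_sum_pow_mul_birthdayProduct hne]
  field_simp

end

/-- Scaling limit of the complete-graph potential at the critical scale `q ∼ wz√N`. -/
theorem stmt2 (w z : ℝ) (hw : 0 < w) (hz : 0 < z) (q : ℕ → ℝ) (hqpos : ∀ N, 0 < q N)
    (hq : Tendsto (fun N : ℕ => q N / (w * Real.sqrt N)) atTop (nhds z)) :
    Tendsto (fun N : ℕ =>
        ∑ h ∈ Finset.Icc 1 (N - 1),
          q N / (q N + (N : ℝ) * w) * ((N : ℝ) * w / (q N + (N : ℝ) * w)) ^ (h - 1) *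
            ∏ k ∈ Finset.Icc 2 h, (1 - (k : ℝ) / (N : ℝ)))
      atTop
      (nhds (Real.sqrt (2 * Real.pi) * z * Real.exp (z ^ 2 / 2) *
        ∫ t in Set.Ioi z, (1 / Real.sqrt (2 * Real.pi)) * Real.exp (-t ^ 2 / 2))) :=
  stmt2_general w z hw.ne' q hq
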